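/- arXiv:2212.08792 — 10 statements merged into one kernel-verified Lean document; each statement's English description precedes it below -/
import Mathlib

section
/- Assume q ≤ p²·(1−q)^{2(k−1)}. Then for all integers a, b, a′, b′ with 1−k ≤ a, b, a′, b′ ≤ k−1 and a + b = a′ + b′, one has (P_a·P_b − q)·q²·(1−q)^{2(k−1)} ≤ (p²·(1−q)^{2(k−1)} − q)·P_{a′}·P_{b′}. (This is the inequality underlying Theorem 2: RanSwitch satisfies (ε, δ)-TLDP with ε = ln((p²(1−q)^{2(k−1)} − q)/(q²(1−q)^{2(k−1)})) and δ = q.) -/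
/-- core inequality of Theorem 2, case `q ≤ p²(1-q)^{2(k-1)}`:
with the RanSwitch allocating probabilities `P_0 = p(1-q)^{k-1}` and
`P_j = q(1-q)^{k-1+j}` (`j ≠ 0`), for all `a, b, a', b'` in `[1-k, k-1]` with
`a + b = a' + b'` one has
`(P_a P_b − q) q² (1−q)^{2(k−1)} ≤ (p²(1−q)^{2(k−1)} − q) P_{a'} P_{b'}`,
i.e. RanSwitch satisfies `(ε, δ)`-TLDP with
`ε = ln((p²(1−q)^{2(k−1)} − q)/(q²(1−q)^{2(k−1)}))` and `δ = q`. -/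
theorem ranSwitch_TLDP_case1
    (k : ℕ) (hk : 2 ≤ k) (p q : ℝ)
    (hp : p ∈ Set.Ioo (0 : ℝ) 1) (hq : q ∈ Set.Ioo (0 : ℝ) 1)
    (hpq : p + (k - 1 : ℝ) * q = 1) (hpgtq : q < p)
    (P : ℤ → ℝ)
    (hP0 : P 0 = p * (1 - q) ^ (k - 1))
    (hPj : ∀ j : ℤ, 1 - (k : ℤ) ≤ j → j ≤ (k : ℤ) - 1 → j ≠ 0 →
      P j = q * (1 - q) ^ ((k : ℤ) - 1 + j))
    (hcase : q ≤ p ^ 2 * (1 - q) ^ (2 * (k - 1))) :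
    ∀ a b a' b' : ℤ,
      1 - (k : ℤ) ≤ a → a ≤ (k : ℤ) - 1 →
      1 - (k : ℤ) ≤ b → b ≤ (k : ℤ) - 1 →
      1 - (k : ℤ) ≤ a' → a' ≤ (k : ℤ) - 1 →
      1 - (k : ℤ) ≤ b' → b' ≤ (k : ℤ) - 1 →
      a + b = a' + b' →
      (P a * P b - q) * (q ^ 2 * (1 - q) ^ (2 * (k - 1)))
        ≤ (p ^ 2 * (1 - q) ^ (2 * (k - 1)) - q) * (P a' * P b') := by
  obtain ⟨hp0, hp1⟩ := hp
  obtain ⟨hq0, hq1⟩ := hq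
  have hr0 : 0 < 1 - q := by linarith
  have hr1 : 1 - q ≤ 1 := by linarith
  have key : ∀ j : ℤ, 1 - (k : ℤ) ≤ j → j ≤ (k : ℤ) - 1 →
      ∃ c, P j = c * (1 - q) ^ ((k : ℤ) - 1 + j) ∧ q ≤ c ∧ c ≤ p ∧ (j ≠ 0 → c = q) := by
    intro j h1 h2
    by_cases hj : j = 0
    · subst hj
      refine ⟨p, ?_, hpgtq.le, le_rfl, fun h => absurd rfl h⟩
      rw [hP0, ← zpow_natCast]
      congr 2
      omega
    · exact ⟨q, hPj j h1 h2 hj, le_rfl, hpgtq.le, fun _ => rfl⟩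
  intro a b a' b' ha1 ha2 hb1 hb2 ha1' ha2' hb1' hb2' hab
  obtain ⟨c, hc, hc1, hc2, hc3⟩ := key a ha1 ha2
  obtain ⟨d, hd, hd1, hd2, hd3⟩ := key b hb1 hb2
  obtain ⟨c', hc', hc1', -, -⟩ := key a' ha1' ha2'
  obtain ⟨d', hd', hd1', -, -⟩ := key b' hb1' hb2'
  have hM0 : 0 < (1 - q) ^ (2 * (k - 1)) := by positivity
  have hX0 : 0 < (1 - q) ^ (a + b) := by positivity
  have hsplit : ∀ x y : ℤ, (1 - q) ^ ((k : ℤ) - 1 + x) * (1 - q) ^ ((k : ℤ) - 1 + y)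
      = (1 - q) ^ (2 * (k - 1)) * (1 - q) ^ (x + y) := by
    intro x y
    rw [← zpow_natCast, ← zpow_add₀ hr0.ne', ← zpow_add₀ hr0.ne']
    congr 1
    omega
  have e1 : P a * P b = c * d * ((1 - q) ^ (2 * (k - 1)) * (1 - q) ^ (a + b)) := by
    rw [hc, hd, ← hsplit]; ring
  have e2 : P a' * P b' = c' * d' * ((1 - q) ^ (2 * (k - 1)) * (1 - q) ^ (a + b)) := by
    rw [hc', hd', hab, ← hsplit]; ring
  have hMX : (1 - q) ^ (2 * (k - 1)) * (1 - q) ^ (a + b) ≤ 1 := by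
    rw [← hsplit, ← zpow_add₀ hr0.ne']
    obtain ⟨n, hn⟩ := Int.eq_ofNat_of_zero_le
      (show 0 ≤ (k : ℤ) - 1 + a + ((k : ℤ) - 1 + b) by omega)
    rw [hn]
    exact_mod_cast pow_le_one₀ hr0.le hr1
  have hX1 : 0 ≤ a + b → (1 - q) ^ (a + b) ≤ 1 := by
    intro h
    obtain ⟨n, hn⟩ := Int.eq_ofNat_of_zero_le h
    rw [hn]
    exact_mod_cast pow_le_one₀ hr0.le hr1
  rw [e1, e2]
  generalize (1 - q) ^ (2 * (k - 1)) = M at *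
  generalize (1 - q) ^ (a + b) = X at *
  have hMX0 : 0 < M * X := mul_pos hM0 hX0
  have hcd' : q ^ 2 ≤ c' * d' := by nlinarith
  have main : c * d * (M * X) - q ≤ (p ^ 2 * M - q) * X := by
    by_cases h : 0 ≤ a + b
    · have hX := hX1 h
      have hcd : c * d ≤ p ^ 2 := by nlinarith
      nlinarith [mul_le_mul_of_nonneg_right hcd hMX0.le]
    · have hcd : c * d ≤ q := by
        by_cases h0 : a = 0
        · have := hd3 (by omega)
          subst this
          nlinarith
        · have := hc3 h0
          subst this
          nlinarith
      have h1 : c * d * (M * X) ≤ q := by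
        nlinarith [mul_le_mul_of_nonneg_right hcd hMX0.le]
      have h2 : 0 ≤ (p ^ 2 * M - q) * X := mul_nonneg (by linarith) hX0.le
      linarith
  calc (c * d * (M * X) - q) * (q ^ 2 * M)
      ≤ (p ^ 2 * M - q) * X * (q ^ 2 * M) :=
        mul_le_mul_of_nonneg_right main (by positivity)
    _ = (p ^ 2 * M - q) * (q ^ 2 * (M * X)) := by ring
    _ ≤ (p ^ 2 * M - q) * (c' * d' * (M * X)) :=
        mul_le_mul_of_nonneg_left (mul_le_mul_of_nonneg_right hcd' hMX0.le) (by linarith)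
end

section
/- For every offset sequence x : ℕ → {0, 1, …, k−1}, the output map t ↦ R_t of the RanSwitch process is injective, and R_t ≤ t + k − 1 for every t ∈ ℕ. Equivalently, the two-way switch operation never releases a value twice (no repeated values), and the value originally at position i is never released before time i − k + 1. -/
/-- The RanSwitch process: `ranSwitchA x t` is the bijection `A_t : ℕ → ℕ` recording, for each
slot, the original position of the value currently there. `A_0 = id` and `A_{t+1}` is obtained
from `A_t` by swapping the entries at positions `t` and `t + x t`. -/
def ranSwitchA (x : ℕ → ℕ) : ℕ → ℕ → ℕ
  | 0 => id
  | t + 1 => fun s => ranSwitchA x t (Equiv.swap t (t + x t) s)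

/-- The output of the RanSwitch process at time `t`: the original position of the value released
at time `t`, i.e. `R_t = A_t (t + x t)`. -/
def ranSwitchR (x : ℕ → ℕ) (t : ℕ) : ℕ := ranSwitchA x t (t + x t)

theorem ranSwitchA_inj (x : ℕ → ℕ) (t : ℕ) : Function.Injective (ranSwitchA x t) := by
  induction t with
  | zero => exact Function.injective_id
  | succ t ih => exact ih.comp (Equiv.swap t (t + x t)).injective

theorem ranSwitchA_stable (x : ℕ → ℕ) (t d : ℕ) :
    ranSwitchA x (t + 1 + d) t = ranSwitchR x t := by
  induction d with
  | zero => simp [ranSwitchA, ranSwitchR]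
  | succ d ih =>
    change ranSwitchA x (t + 1 + d) (Equiv.swap (t + 1 + d) (t + 1 + d + x (t + 1 + d)) t) = _
    rw [Equiv.swap_apply_of_ne_of_ne (by omega) (by omega), ih]

theorem ranSwitchA_bound (k : ℕ) (x : ℕ → ℕ) (hx : ∀ t, x t ≤ k - 1) (t : ℕ) :
    ∀ s M, t + k ≤ M + 1 → s ≤ M → ranSwitchA x t s ≤ M := by
  induction t with
  | zero => intro s M _ h; exact h
  | succ t ih =>
    intro s M hM hs
    have := hx t
    refine ih _ M (by omega) ?_
    rw [Equiv.swap_apply_def]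
    split_ifs <;> omega

theorem ranSwitchR_ne (x : ℕ → ℕ) (t u : ℕ) (h : t < u) : ranSwitchR x t ≠ ranSwitchR x u := by
  obtain ⟨d, rfl⟩ := Nat.exists_eq_add_of_le (Nat.succ_le_of_lt h)
  intro e
  rw [← ranSwitchA_stable x t d] at e
  have := ranSwitchA_inj x _ e
  omega

/-- for every offset sequence `x` with values in `{0, …, k-1}`, the output map
`t ↦ R_t` of the RanSwitch process is injective (no value is released twice), and
`R_t ≤ t + k - 1` for every `t` (the value originally at position `i` is never released
before time `i - k + 1`). -/
theorem ranSwitch_injective_and_window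
    (k : ℕ) (hk : 2 ≤ k) (x : ℕ → ℕ) (hx : ∀ t, x t ≤ k - 1) :
    Function.Injective (ranSwitchR x) ∧ ∀ t, ranSwitchR x t ≤ t + k - 1 := by
  refine ⟨fun t u e => ?_, fun t => ?_⟩
  · rcases lt_trichotomy t u with h | h | h
    · exact absurd e (ranSwitchR_ne x t u h)
    · exact h
    · exact absurd e.symm (ranSwitchR_ne x u t h)
  · have := hx t
    exact ranSwitchA_bound k x hx t _ _ (by omega) (by omega)
end

section
/- For every admissible offset sequence of the StaSwitch process, the delay invariant b_t(s) ≤ k − 1 holds for all t and s, the output map t ↦ R_t is a bijection from ℕ to ℕ, and |R_t − t| ≤ k − 1 for every t ∈ ℕ. Equivalently, StaSwitch releases every value exactly once (no missing, empty, or repeated values), and each value is released within k − 1 timestamps of its original position. -/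
/-- The state of the StaSwitch process after `t` steps, for a given offset sequence `x`:
the first component is the bijection `A_t : ℕ → ℕ` (`A_t s` is the original position of the
value currently at slot `s`; `A_0 = id`), and the second component is the delay counter
`b_t : ℕ → ℕ` (`b_0 ≡ 0`). At step `t`, `A_{t+1}` is obtained from `A_t` by swapping the
entries at positions `t` and `t + x t`, and `b_{t+1}` agrees with `b_t` except that
`b_{t+1}(t + x t) = b_t t + x t`. -/
def staState (x : ℕ → ℕ) : ℕ → (ℕ → ℕ) × (ℕ → ℕ)
  | 0 => (id, fun _ => 0)
  | t + 1 =>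
      ((fun s => (staState x t).1 (Equiv.swap t (t + x t) s)),
       Function.update (staState x t).2 (t + x t) ((staState x t).2 t + x t))

/-- The output of the StaSwitch process at time `t`: the original position of the value
released at time `t`, i.e. `R_t = A_t (t + x t)`. -/
def staR (x : ℕ → ℕ) (t : ℕ) : ℕ := (staState x t).1 (t + x t)

theorem sta_b_le (k : ℕ) (x : ℕ → ℕ)
    (hadm : ∀ t, x t + (staState x t).2 t ≤ k - 1) :
    ∀ t s, (staState x t).2 s ≤ k - 1 := by
  intro t
  induction t with
  | zero => intro s; simp [staState]
  | succ t ih =>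
    intro s
    have h1 := hadm t
    have h2 := ih s
    simp only [staState, Function.update_apply]
    split_ifs <;> omega

theorem sta_inv (x : ℕ → ℕ) :
    ∀ t s, t ≤ s → (staState x t).1 s + (staState x t).2 s = s := by
  intro t
  induction t with
  | zero => intro s _; simp [staState]
  | succ t ih =>
    intro s hs
    have h1 := ih t le_rfl
    have h2 := ih s (by omega)
    simp only [staState, Function.update_apply, Equiv.swap_apply_def]
    split_ifs <;> omega

theorem sta_bij (x : ℕ → ℕ) : ∀ t, Function.Bijective (staState x t).1 := by
  intro t
  induction t with
  | zero => exact Function.bijective_id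
  | succ t ih => exact ih.comp (Equiv.swap t (t + x t)).bijective

theorem sta_out (x : ℕ → ℕ) (t : ℕ) : ∀ T, t < T → (staState x T).1 t = staR x t := by
  intro T hT
  induction T, hT using Nat.le_induction with
  | base => simp [staState, staR]
  | succ T hT ih =>
    rw [← ih]
    simp only [staState]
    rw [Equiv.swap_apply_of_ne_of_ne] <;> omega

/-- for every admissible offset sequence (i.e. `x t ≤ k - 1 - b_t t` at every
step), the delay invariant `b_t s ≤ k - 1` holds for all `t` and `s`, the output map
`t ↦ R_t` is a bijection of `ℕ` (no missing, empty, or repeated values), and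
`|R_t − t| ≤ k − 1` for every `t` (each value is released within `k-1` timestamps of its
original position). -/
theorem staSwitch_invariant_bijective_window
    (k : ℕ) (hk : 2 ≤ k) (x : ℕ → ℕ)
    (hadm : ∀ t, x t + (staState x t).2 t ≤ k - 1) :
    (∀ t s, (staState x t).2 s ≤ k - 1) ∧
    Function.Bijective (staR x) ∧
    (∀ t, |(staR x t : ℤ) - (t : ℤ)| ≤ (k : ℤ) - 1) := by
  have hb := sta_b_le k x hadm
  refine ⟨hb, ⟨?_, ?_⟩, ?_⟩
  · intro s t h
    rw [← sta_out x s (s + t + 1) (by omega), ← sta_out x t (s + t + 1) (by omega)] at h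
    exact (sta_bij x _).1 h
  · intro v
    obtain ⟨s, hs⟩ := (sta_bij x (v + k)).2 v
    by_cases hlt : s < v + k
    · exact ⟨s, by rw [← sta_out x s _ hlt, hs]⟩
    · have h1 := sta_inv x (v + k) s (by omega)
      have h2 := hb (v + k) s
      omega
  · intro t
    have h1 := sta_inv x t (t + x t) (by omega)
    have h2 := hb t (t + x t)
    have h3 := hadm t
    unfold staR
    rw [abs_le]
    constructor <;> omega
end

section
/- The delay-state probabilities are strictly increasing: P^1 < P^2 < ⋯ < P^{k−1}. (This is Lemma 1 of the paper.) -/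
/-- Lemma 1 of the paper: the delay-state probabilities are strictly
increasing: `P^1 < P^2 < ⋯ < P^{k−1}`. -/
theorem staSwitch_delay_state_strict_mono
    (k : ℕ) (hk : 3 ≤ k) (p q : ℝ)
    (hp : p ∈ Set.Ioo (0 : ℝ) 1) (hq : q ∈ Set.Ioo (0 : ℝ) 1)
    (hpq : p + (k - 1 : ℝ) * q = 1)
    (P Q : ℕ → ℝ)
    (hPmem : ∀ i, i ≤ k - 1 → P i ∈ Set.Ioo (0 : ℝ) 1)
    (hQmem : ∀ j, 1 ≤ j → j ≤ k - 1 → Q j ∈ Set.Ioo (0 : ℝ) 1)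
    (hQ : ∀ j, 1 ≤ j → j ≤ k - 1 → Q j = q * ∑ i ∈ Finset.range (k - j), P i)
    (hP0 : P 0 = ∏ j ∈ Finset.Icc 1 (k - 1), (1 - Q j))
    (hPi : ∀ i, 1 ≤ i → i ≤ k - 1 →
      P i = q * ∑ j ∈ Finset.range i, P j * ∏ l ∈ Finset.Icc 1 (i - 1 - j), (1 - Q l))
    (hPsum : ∑ i ∈ Finset.range k, P i = 1)
    (p0 : ℝ) (hp0 : p0 = ∑ i ∈ Finset.range k, P i * (p + (i : ℝ) * q))
    :
    ∀ i, 1 ≤ i → i + 1 ≤ k - 1 → P i < P (i + 1) := by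
  intro i hi1 hik
  have hq0 : 0 < q := hq.1
  have hQlt : ∀ l, 1 ≤ l → l ≤ k - 1 → Q l < q := by
    intro l hl1 hl2
    have hlt : ∑ i ∈ Finset.range (k - l), P i < ∑ i ∈ Finset.range k, P i := by
      apply Finset.sum_lt_sum_of_subset (i := k - 1)
      · intro x hx
        simp only [Finset.mem_range] at hx ⊢
        omega
      · simp only [Finset.mem_range]
        omega
      · simp only [Finset.mem_range]
        omega
      · exact (hPmem (k - 1) le_rfl).1
      · intro j hj _
        simp only [Finset.mem_range] at hj
        exact (hPmem j (by omega)).1.le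
    rw [hPsum] at hlt
    rw [hQ l hl1 hl2]
    nlinarith
  have h1 := hPi i hi1 (by omega)
  have h2 := hPi (i + 1) (by omega) hik
  rw [Finset.sum_range_succ] at h2
  have e : i + 1 - 1 - i = 0 := by omega
  rw [e] at h2
  simp only [Finset.Icc_eq_empty_of_lt (zero_lt_one' ℕ), Finset.prod_empty, mul_one] at h2
  have key : (∑ j ∈ Finset.range i, P j * ∏ l ∈ Finset.Icc 1 (i - 1 - j), (1 - Q l)) <
      (∑ j ∈ Finset.range i, P j * ∏ l ∈ Finset.Icc 1 (i + 1 - 1 - j), (1 - Q l)) + P i := by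
    rw [h1]
    rw [Finset.mul_sum, ← Finset.sum_add_distrib]
    apply Finset.sum_lt_sum_of_nonempty
    · exact Finset.nonempty_range_iff.mpr (by omega)
    · intro j hj
      simp only [Finset.mem_range] at hj
      obtain ⟨m, rfl⟩ : ∃ m, i = j + 1 + m := ⟨i - (j + 1), by omega⟩
      have e1 : j + 1 + m - 1 - j = m := by omega
      have e2 : j + 1 + m + 1 - 1 - j = m + 1 := by omega
      rw [e1, e2, Finset.prod_Icc_succ_top (by omega)]
      have hR : 0 < ∏ l ∈ Finset.Icc 1 m, (1 - Q l) := by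
        apply Finset.prod_pos
        intro l hl
        simp only [Finset.mem_Icc] at hl
        have := (hQmem l hl.1 (by omega)).2
        linarith
      have hPR := mul_pos (hPmem j (by omega)).1 hR
      have := mul_pos hPR (sub_pos.mpr (hQlt (m + 1) (by omega) (by omega)))
      linarith
  calc P i = _ := h1
    _ < _ := mul_lt_mul_of_pos_left key hq0
    _ = P (i + 1) := h2.symm
end

section
/- The probability of the maximal delay state satisfies P^{k−1} ≤ q/(1+q), with strict inequality when k ≥ 3. -/
/-- the probability of the maximal delay state satisfies
`P^{k−1} ≤ q/(1+q)`, with strict inequality when `k ≥ 3`. -/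
theorem staSwitch_max_delay_state_bound
    (k : ℕ) (hk : 3 ≤ k) (p q : ℝ)
    (hp : p ∈ Set.Ioo (0 : ℝ) 1) (hq : q ∈ Set.Ioo (0 : ℝ) 1)
    (hpq : p + (k - 1 : ℝ) * q = 1)
    (P Q : ℕ → ℝ)
    (hPmem : ∀ i, i ≤ k - 1 → P i ∈ Set.Ioo (0 : ℝ) 1)
    (hQmem : ∀ j, 1 ≤ j → j ≤ k - 1 → Q j ∈ Set.Ioo (0 : ℝ) 1)
    (hQ : ∀ j, 1 ≤ j → j ≤ k - 1 → Q j = q * ∑ i ∈ Finset.range (k - j), P i)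
    (hP0 : P 0 = ∏ j ∈ Finset.Icc 1 (k - 1), (1 - Q j))
    (hPi : ∀ i, 1 ≤ i → i ≤ k - 1 →
      P i = q * ∑ j ∈ Finset.range i, P j * ∏ l ∈ Finset.Icc 1 (i - 1 - j), (1 - Q l))
    (hPsum : ∑ i ∈ Finset.range k, P i = 1)
    (p0 : ℝ) (hp0 : p0 = ∑ i ∈ Finset.range k, P i * (p + (i : ℝ) * q))
    :
    P (k - 1) ≤ q / (1 + q) ∧ (3 ≤ k → P (k - 1) < q / (1 + q)) := by
  obtain ⟨m, rfl⟩ : ∃ m, k = m + 3 := ⟨k - 3, by omega⟩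
  have e : m + 3 - 1 = m + 2 := by omega
  rw [e] at *
  have hle : ∀ n, n ≤ m + 1 → ∏ l ∈ Finset.Icc 1 n, (1 - Q l) ≤ 1 := by
    intro n hn
    apply Finset.prod_le_one
    · intro l hl
      rw [Finset.mem_Icc] at hl
      have := (hQmem l hl.1 (by omega)).2
      linarith
    · intro l hl
      rw [Finset.mem_Icc] at hl
      have := (hQmem l hl.1 (by omega)).1
      linarith
  have hlt : ∏ l ∈ Finset.Icc 1 (m + 1), (1 - Q l) < 1 := by
    rw [Finset.prod_Icc_succ_top (by omega)]
    have h1 := hle m (by omega)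
    have h2 := hQmem (m + 1) (by omega) (by omega)
    have h3 : 0 < 1 - Q (m + 1) := by linarith [h2.2]
    have h4 := mul_le_mul_of_nonneg_right h1 h3.le
    linarith [h2.1]
  have hS : ∑ j ∈ Finset.range (m + 2), P j * ∏ l ∈ Finset.Icc 1 (m + 2 - 1 - j), (1 - Q l)
      < ∑ j ∈ Finset.range (m + 2), P j := by
    apply Finset.sum_lt_sum
    · intro j hj
      rw [Finset.mem_range] at hj
      exact mul_le_of_le_one_right (hPmem j (by omega)).1.le (hle _ (by omega))
    · refine ⟨0, by simp, ?_⟩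
      have : m + 2 - 1 - 0 = m + 1 := by omega
      rw [this]
      exact mul_lt_of_lt_one_right (hPmem 0 (by omega)).1 hlt
  have hP := hPi (m + 2) (by omega) le_rfl
  rw [Finset.sum_range_succ] at hPsum
  have hmain : P (m + 2) < q / (1 + q) := by
    rw [lt_div_iff₀ (by linarith [hq.1])]
    have h5 := mul_lt_mul_of_pos_left hS hq.1
    rw [← hP] at h5
    have h6 : ∑ j ∈ Finset.range (m + 2), P j = 1 - P (m + 2) := by linarith
    rw [h6] at h5
    linarith
  exact ⟨hmain.le, fun _ => hmain⟩
end

section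
/- The expected probability of staying at the current timestamp satisfies p_0 ≤ p + k(1−p)q/(2(1+q)). -/
/-- the expected probability of staying at the current timestamp satisfies
`p_0 ≤ p + k(1−p)q/(2(1+q))`. -/
theorem staSwitch_p0_upper_bound
    (k : ℕ) (hk : 3 ≤ k) (p q : ℝ)
    (hp : p ∈ Set.Ioo (0 : ℝ) 1) (hq : q ∈ Set.Ioo (0 : ℝ) 1)
    (hpq : p + (k - 1 : ℝ) * q = 1)
    (P Q : ℕ → ℝ)
    (hPmem : ∀ i, i ≤ k - 1 → P i ∈ Set.Ioo (0 : ℝ) 1)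
    (hQmem : ∀ j, 1 ≤ j → j ≤ k - 1 → Q j ∈ Set.Ioo (0 : ℝ) 1)
    (hQ : ∀ j, 1 ≤ j → j ≤ k - 1 → Q j = q * ∑ i ∈ Finset.range (k - j), P i)
    (hP0 : P 0 = ∏ j ∈ Finset.Icc 1 (k - 1), (1 - Q j))
    (hPi : ∀ i, 1 ≤ i → i ≤ k - 1 →
      P i = q * ∑ j ∈ Finset.range i, P j * ∏ l ∈ Finset.Icc 1 (i - 1 - j), (1 - Q l))
    (hPsum : ∑ i ∈ Finset.range k, P i = 1)
    (p0 : ℝ) (hp0 : p0 = ∑ i ∈ Finset.range k, P i * (p + (i : ℝ) * q))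
    :
    p0 ≤ p + (k : ℝ) * (1 - p) * q / (2 * (1 + q)) := by
  obtain ⟨hq0, hq1⟩ := hq
  have key : ∀ i ∈ Finset.range k, P i * (i : ℝ) ≤ q / (1 + q) * (i : ℝ) := by
    intro i hi
    have hik := Finset.mem_range.1 hi
    rcases Nat.eq_zero_or_pos i with h0 | h0
    · subst h0; simp
    apply mul_le_mul_of_nonneg_right _ (Nat.cast_nonneg i)
    rw [le_div_iff₀ (by linarith)]
    have h1 : ∑ j ∈ Finset.range i, P j * ∏ l ∈ Finset.Icc 1 (i - 1 - j), (1 - Q l)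
        ≤ ∑ j ∈ Finset.range i, P j := by
      apply Finset.sum_le_sum
      intro j hj
      have hj' := Finset.mem_range.1 hj
      apply mul_le_of_le_one_right (hPmem j (by omega)).1.le
      apply Finset.prod_le_one
      · intro l hl
        have hl' := Finset.mem_Icc.1 hl
        linarith [(hQmem l hl'.1 (by omega)).2]
      · intro l hl
        have hl' := Finset.mem_Icc.1 hl
        linarith [(hQmem l hl'.1 (by omega)).1]
    have h2 : ∑ j ∈ Finset.range (i + 1), P j ≤ ∑ j ∈ Finset.range k, P j := by
      apply Finset.sum_le_sum_of_subset_of_nonneg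
      · exact Finset.range_subset_range.2 (by omega)
      · intro j hj _
        have hj' := Finset.mem_range.1 hj
        exact (hPmem j (by omega)).1.le
    rw [Finset.sum_range_succ, hPsum] at h2
    have h3 := hPi i h0 (by omega)
    have h4 : P i ≤ q * (1 - P i) := by
      calc P i = _ := h3
        _ ≤ q * (1 - P i) := mul_le_mul_of_nonneg_left (by linarith) hq0.le
    linarith
  have hsum := Finset.sum_le_sum key
  have hg : ∀ n : ℕ, ∑ i ∈ Finset.range n, (i : ℝ) = (n : ℝ) * (n - 1) / 2 := by
    intro n
    induction n with
    | zero => simp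
    | succ n ih => rw [Finset.sum_range_succ, ih]; push_cast; ring
  rw [← Finset.mul_sum, hg] at hsum
  have he : p0 = p + q * ∑ i ∈ Finset.range k, P i * (i : ℝ) := by
    calc p0 = (∑ i ∈ Finset.range k, P i) * p + q * ∑ i ∈ Finset.range k, P i * (i : ℝ) := by
          rw [hp0, Finset.sum_mul, Finset.mul_sum, ← Finset.sum_add_distrib]
          exact Finset.sum_congr rfl fun i _ => by ring
      _ = _ := by rw [hPsum, one_mul]
  have h1p : 1 - p = (k - 1 : ℝ) * q := by linarith
  have hne : 1 + q ≠ 0 := by linarith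
  have hf : (k : ℝ) * (1 - p) * q / (2 * (1 + q))
      = q * (q / (1 + q) * ((k : ℝ) * (k - 1) / 2)) := by
    rw [h1p]; field_simp
  rw [he, hf]
  linarith [mul_le_mul_of_nonneg_left hsum hq0.le]
end

section
/- The first expected perturbation probability admits the averaging lower bound q_1 ≥ (1 − p_0 − q_{k−1})/(k−2) + (k−3)·q·P^1/2. (This is the key lower bound on q_1 in the proof of Theorem 3.) -/
theorem aux_weight (P : ℕ → ℝ) (n : ℕ) :
    ∑ i ∈ Finset.range n, P i * ((n : ℝ) - 1 - i)
      = ∑ m ∈ Finset.range n, ∑ i ∈ Finset.range m, P i := by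
  induction n with
  | zero => simp
  | succ n ih =>
    rw [Finset.sum_range_succ, Finset.sum_range_succ (fun m => ∑ i ∈ Finset.range m, P i), ← ih,
      ← Finset.sum_add_distrib]
    have : P n * (((n + 1 : ℕ) : ℝ) - 1 - n) = 0 := by push_cast; ring
    rw [this, add_zero]
    apply Finset.sum_congr rfl
    intro i _
    push_cast; ring

theorem aux_avg (P : ℕ → ℝ) (n : ℕ) (h : ∀ i, 2 ≤ i → i ≤ n + 1 → P 1 ≤ P i) :
    ∑ m ∈ Finset.range (n + 3), ∑ i ∈ Finset.range m, P i - P 0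
      ≤ ((n : ℝ) + 1) * (∑ i ∈ Finset.range (n + 2), P i - n * P 1 / 2) := by
  induction n with
  | zero => simp [Finset.sum_range_succ]
  | succ n ih =>
    have ih := ih (fun i h1 h2 => h i h1 (by omega))
    have h2 := h (n + 2) (by omega) (by omega)
    rw [Finset.sum_range_succ, show n + 1 + 2 = n + 3 from rfl, Finset.sum_range_succ P (n + 2)]
    push_cast
    have hn : (0 : ℝ) ≤ n := Nat.cast_nonneg n
    nlinarith [mul_nonneg (by linarith : (0 : ℝ) ≤ n + 1) (sub_nonneg.2 h2)]

/-- key lower bound on `q_1` in the proof of Theorem 3: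
`q_1 ≥ (1 − p_0 − q_{k−1})/(k−2) + (k−3)·q·P^1/2`. -/
theorem staSwitch_q1_lower_bound
    (k : ℕ) (hk : 3 ≤ k) (p q : ℝ)
    (hp : p ∈ Set.Ioo (0 : ℝ) 1) (hq : q ∈ Set.Ioo (0 : ℝ) 1)
    (hpq : p + (k - 1 : ℝ) * q = 1)
    (P Q : ℕ → ℝ)
    (hPmem : ∀ i, i ≤ k - 1 → P i ∈ Set.Ioo (0 : ℝ) 1)
    (hQmem : ∀ j, 1 ≤ j → j ≤ k - 1 → Q j ∈ Set.Ioo (0 : ℝ) 1)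
    (hQ : ∀ j, 1 ≤ j → j ≤ k - 1 → Q j = q * ∑ i ∈ Finset.range (k - j), P i)
    (hP0 : P 0 = ∏ j ∈ Finset.Icc 1 (k - 1), (1 - Q j))
    (hPi : ∀ i, 1 ≤ i → i ≤ k - 1 →
      P i = q * ∑ j ∈ Finset.range i, P j * ∏ l ∈ Finset.Icc 1 (i - 1 - j), (1 - Q l))
    (hPsum : ∑ i ∈ Finset.range k, P i = 1)
    (p0 : ℝ) (hp0 : p0 = ∑ i ∈ Finset.range k, P i * (p + (i : ℝ) * q))
    :
    (1 - p0 - Q (k - 1)) / ((k : ℝ) - 2) + ((k : ℝ) - 3) * q * P 1 / 2 ≤ Q 1 := by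
  obtain ⟨n, rfl⟩ : ∃ n, k = n + 3 := ⟨k - 3, by omega⟩
  obtain ⟨hq0, hq1⟩ := hq
  have hQle : ∀ j, 1 ≤ j → j ≤ n + 2 → Q j ≤ q := by
    intro j h1 h2
    rw [hQ j h1 (by omega)]
    have : ∑ i ∈ Finset.range (n + 3 - j), P i ≤ 1 := by
      rw [← hPsum]
      apply Finset.sum_le_sum_of_subset_of_nonneg
      · intro i hi
        simp only [Finset.mem_range] at *
        omega
      · intro i hi _
        simp only [Finset.mem_range] at hi
        exact (hPmem i (by omega)).1.le
    nlinarith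
  have hstep : ∀ i, 1 ≤ i → i + 1 ≤ n + 2 → P i ≤ P (i + 1) := by
    intro i h1 h2
    have e2 := hPi (i + 1) (by omega) (by omega)
    have e1 := hPi i h1 (by omega)
    have key : ∑ j ∈ Finset.range i, P j * ∏ l ∈ Finset.Icc 1 (i - 1 - j), (1 - Q l)
        ≤ ∑ j ∈ Finset.range (i + 1), P j * ∏ l ∈ Finset.Icc 1 (i + 1 - 1 - j), (1 - Q l) := by
      rw [Finset.sum_range_succ]
      have : P i * ∏ l ∈ Finset.Icc 1 (i + 1 - 1 - i), (1 - Q l) = P i := by simp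
      rw [this]
      conv_rhs => rw [e1]
      rw [Finset.mul_sum, ← Finset.sum_add_distrib]
      apply Finset.sum_le_sum
      intro j hj
      simp only [Finset.mem_range] at hj
      have e : i + 1 - 1 - j = (i - 1 - j) + 1 := by omega
      rw [e, Finset.prod_Icc_succ_top (by omega)]
      have a1 := (hPmem j (by omega)).1.le
      have a2 : 0 ≤ ∏ l ∈ Finset.Icc 1 (i - 1 - j), (1 - Q l) := by
        apply Finset.prod_nonneg
        intro l hl
        rw [Finset.mem_Icc] at hl
        linarith [(hQmem l hl.1 (by omega)).2]
      have a3 := hQle (i - 1 - j + 1) (by omega) (by omega)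
      nlinarith [mul_nonneg (mul_nonneg a1 a2) (sub_nonneg.2 a3)]
    rw [e1, e2]
    exact mul_le_mul_of_nonneg_left key hq0.le
  have hmono : ∀ i, 1 ≤ i → i ≤ n + 2 → P 1 ≤ P i := by
    intro i h1
    induction i, h1 using Nat.le_induction with
    | base => intro _; exact le_rfl
    | succ i h1 ih => intro h2; exact (ih (by omega)).trans (hstep i h1 h2)
  have hA := aux_avg P n (fun i h1 h2 => hmono i (by omega) (by omega))
  have hW := aux_weight P (n + 3)
  have h1p : 1 - p0 = q * ∑ m ∈ Finset.range (n + 3), ∑ i ∈ Finset.range m, P i := by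
    rw [← hW, hp0]
    nth_rewrite 1 [← hPsum]
    rw [← Finset.sum_sub_distrib, Finset.mul_sum]
    apply Finset.sum_congr rfl
    intro i _
    linear_combination (-P i) * hpq
  have hQ1 := hQ 1 le_rfl (by omega)
  have hQk := hQ (n + 3 - 1) (by omega) le_rfl
  rw [show n + 3 - (n + 3 - 1) = 1 by omega, Finset.sum_range_one] at hQk
  rw [show n + 3 - 1 = n + 2 by omega] at hQ1 hQk ⊢
  rw [h1p, hQk, hQ1]
  have hn : (0 : ℝ) < n + 1 := by positivity
  have c2 : ((n + 3 : ℕ) : ℝ) - 2 = n + 1 := by push_cast; ring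
  have c3 : ((n + 3 : ℕ) : ℝ) - 3 = n := by push_cast; ring
  rw [c2, c3, ← le_sub_iff_add_le, div_le_iff₀ hn]
  nlinarith [mul_le_mul_of_nonneg_left hA hq0.le]
end

section
/- The zero-delay probability satisfies (1−q)^{k−1} ≤ P^0 ≤ 1/(2−p); consequently q_{k−1} = q·P^0 ≤ q/(2−p) and P^1 = q·P^0 ≥ q·(1−q)^{k−1}. -/
/-- the zero-delay probability satisfies `(1−q)^{k−1} ≤ P^0 ≤ 1/(2−p)`;
consequently `q_{k−1} = q·P^0 ≤ q/(2−p)` and `P^1 = q·P^0 ≥ q·(1−q)^{k−1}`. -/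
theorem staSwitch_P0_bounds
    (k : ℕ) (hk : 3 ≤ k) (p q : ℝ)
    (hp : p ∈ Set.Ioo (0 : ℝ) 1) (hq : q ∈ Set.Ioo (0 : ℝ) 1)
    (hpq : p + (k - 1 : ℝ) * q = 1)
    (P Q : ℕ → ℝ)
    (hPmem : ∀ i, i ≤ k - 1 → P i ∈ Set.Ioo (0 : ℝ) 1)
    (hQmem : ∀ j, 1 ≤ j → j ≤ k - 1 → Q j ∈ Set.Ioo (0 : ℝ) 1)
    (hQ : ∀ j, 1 ≤ j → j ≤ k - 1 → Q j = q * ∑ i ∈ Finset.range (k - j), P i)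
    (hP0 : P 0 = ∏ j ∈ Finset.Icc 1 (k - 1), (1 - Q j))
    (hPi : ∀ i, 1 ≤ i → i ≤ k - 1 →
      P i = q * ∑ j ∈ Finset.range i, P j * ∏ l ∈ Finset.Icc 1 (i - 1 - j), (1 - Q l))
    (hPsum : ∑ i ∈ Finset.range k, P i = 1)
    (p0 : ℝ) (hp0 : p0 = ∑ i ∈ Finset.range k, P i * (p + (i : ℝ) * q))
    :
    (1 - q) ^ (k - 1) ≤ P 0 ∧ P 0 ≤ 1 / (2 - p) ∧
    Q (k - 1) = q * P 0 ∧ Q (k - 1) ≤ q / (2 - p) ∧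
    P 1 = q * P 0 ∧ q * (1 - q) ^ (k - 1) ≤ P 1 := by
  obtain ⟨hq0, hq1⟩ := hq
  obtain ⟨hp0', hp1⟩ := hp
  have hQle : ∀ j, 1 ≤ j → j ≤ k - 1 → Q j ≤ q := by
    intro j h1 h2
    rw [hQ j h1 h2]
    have : ∑ i ∈ Finset.range (k - j), P i ≤ ∑ i ∈ Finset.range k, P i := by
      apply Finset.sum_le_sum_of_subset_of_nonneg
      · intro x hx
        simp only [Finset.mem_range] at hx ⊢
        omega
      · intro x hx _
        simp only [Finset.mem_range] at hx
        exact (hPmem x (by omega)).1.le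
    rw [hPsum] at this
    nlinarith
  have hlow : (1 - q) ^ (k - 1) ≤ P 0 := by
    rw [hP0]
    calc (1 - q) ^ (k - 1) = ∏ j ∈ Finset.Icc 1 (k - 1), (1 - q) := by simp
      _ ≤ _ := by
        apply Finset.prod_le_prod
        · intro i _
          linarith
        · intro i hi
          simp only [Finset.mem_Icc] at hi
          linarith [hQle i hi.1 hi.2]
  have hP1 : P 1 = q * P 0 := by
    have := hPi 1 le_rfl (by omega)
    simpa using this
  have hQk : Q (k - 1) = q * P 0 := by
    have := hQ (k - 1) (by omega) le_rfl
    rw [show k - (k - 1) = 1 by omega] at this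
    simpa using this
  have hstep : ∀ i, 1 ≤ i → i + 1 ≤ k - 1 → P i ≤ P (i + 1) := by
    intro i h1 h2
    have e1 := hPi i h1 (by omega)
    have e2 := hPi (i + 1) (by omega) h2
    rw [Finset.sum_range_succ] at e2
    have hle : (1 - q) * ∑ j ∈ Finset.range i, P j * ∏ l ∈ Finset.Icc 1 (i - 1 - j), (1 - Q l)
        ≤ ∑ j ∈ Finset.range i, P j * ∏ l ∈ Finset.Icc 1 (i + 1 - 1 - j), (1 - Q l) := by
      rw [Finset.mul_sum]
      apply Finset.sum_le_sum
      intro j hj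
      simp only [Finset.mem_range] at hj
      rw [show i + 1 - 1 - j = (i - 1 - j) + 1 by omega,
        Finset.prod_Icc_succ_top (by omega)]
      have hA : 0 ≤ P j * ∏ l ∈ Finset.Icc 1 (i - 1 - j), (1 - Q l) := by
        apply mul_nonneg (hPmem j (by omega)).1.le
        apply Finset.prod_nonneg
        intro l hl
        simp only [Finset.mem_Icc] at hl
        linarith [(hQmem l hl.1 (by omega)).2]
      have hB := hQle (i - 1 - j + 1) (by omega) (by omega)
      have hC := mul_le_mul_of_nonneg_left hB hA
      linear_combination hC
    have hlast : ∏ l ∈ Finset.Icc 1 (i + 1 - 1 - i), (1 - Q l) = 1 := by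
      simp
    rw [hlast] at e2
    have := mul_le_mul_of_nonneg_left hle hq0.le
    rw [e2]
    linear_combination this + (1 - q) * e1
  have hge : ∀ i, i + 1 ≤ k - 1 → q * P 0 ≤ P (i + 1) := by
    intro i
    induction i with
    | zero => intro _; exact hP1.ge
    | succ n ih =>
      intro h
      exact (ih (by omega)).trans (hstep (n + 1) (by omega) h)
  have hkey : P 0 * (2 - p) ≤ 1 := by
    obtain ⟨m, rfl⟩ : ∃ m, k = m + 1 := ⟨k - 1, by omega⟩
    rw [Finset.sum_range_succ'] at hPsum
    have : ∑ i ∈ Finset.range m, q * P 0 ≤ ∑ i ∈ Finset.range m, P (i + 1) := by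
      apply Finset.sum_le_sum
      intro i hi
      simp only [Finset.mem_range] at hi
      exact hge i (by omega)
    simp only [Finset.sum_const, Finset.card_range, nsmul_eq_mul] at this
    push_cast at hpq
    have h2 : 2 - p = 1 + m * q := by linarith
    rw [h2]
    linarith
  have hup : P 0 ≤ 1 / (2 - p) := by
    rw [le_div_iff₀ (by linarith)]
    exact hkey
  refine ⟨hlow, hup, hQk, ?_, hP1, ?_⟩
  · rw [hQk, div_eq_mul_one_div]
    exact mul_le_mul_of_nonneg_left hup hq0.le
  · rw [hP1]
    exact mul_le_mul_of_nonneg_left hlow hq0.le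
end

section
/- Let δ = max{𝒫_{1−k}, 𝒫_{2−k}, …, 𝒫_{−1}}. Then the worst-case likelihood ratio of StaSwitch satisfies (𝒫_0² − δ)·q·q_1·(p + q + 1 − p_0 − q_{k−1}) ≤ (p² − q_1·(p² − p + 2))·𝒫_1·𝒫_{−1}. (This is the core inequality in the proof of Theorem 3, which bounds the privacy budget ε ≤ ln((𝒫_0² − δ)/(𝒫_1·𝒫_{−1})) of StaSwitch.) -/
theorem aux_prod_reflect (n : ℕ) (f : ℕ → ℝ) :
    ∏ j ∈ Finset.Icc 1 (n + 1), f (n + 2 - j) = ∏ j ∈ Finset.Icc 1 (n + 1), f j := by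
  refine Finset.prod_nbij' (fun j => n + 2 - j) (fun j => n + 2 - j) ?_ ?_ ?_ ?_ ?_
  · intro a ha; simp only [Finset.mem_Icc] at *; omega
  · intro a ha; simp only [Finset.mem_Icc] at *; omega
  · intro a ha; simp only [Finset.mem_Icc] at *; omega
  · intro a ha; simp only [Finset.mem_Icc] at *; omega
  · intro a ha; rfl

theorem aux_sum_reflect (n : ℕ) (f : ℕ → ℝ) :
    ∑ j ∈ Finset.Icc 1 (n + 1), f (n + 2 - j) = ∑ j ∈ Finset.range (n + 1), f (j + 1) := by
  refine Finset.sum_nbij' (fun j => n + 1 - j) (fun j => n + 1 - j) ?_ ?_ ?_ ?_ ?_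
  · intro a ha; simp only [Finset.mem_Icc, Finset.mem_range] at *; omega
  · intro a ha; simp only [Finset.mem_Icc, Finset.mem_range] at *; omega
  · intro a ha; simp only [Finset.mem_Icc, Finset.mem_range] at *; omega
  · intro a ha; simp only [Finset.mem_Icc, Finset.mem_range] at *; omega
  · intro a ha
    simp only [Finset.mem_Icc] at ha
    congr 1; omega

theorem aux_double (P : ℕ → ℝ) (n : ℕ) :
    ∑ j ∈ Finset.range n, ∑ i ∈ Finset.range (j + 1), P i
      = ∑ i ∈ Finset.range (n + 1), P i * ((n : ℝ) - i) := by
  induction n with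
  | zero => simp
  | succ n ih =>
    rw [Finset.sum_range_succ, ih, Finset.sum_range_succ _ (n + 1), ← Finset.sum_add_distrib]
    push_cast
    rw [sub_self, mul_zero, add_zero]
    apply Finset.sum_congr rfl
    intros; ring

theorem aux_growth (n : ℕ) (q : ℝ) (hq : 0 < q) (P Q : ℕ → ℝ)
    (hP : ∀ i, i ≤ n + 1 → 0 < P i)
    (hQ1 : ∀ j, 1 ≤ j → j ≤ n + 1 → Q j < 1)
    (hQq : ∀ j, 1 ≤ j → j ≤ n + 1 → Q j ≤ q)
    (hPi : ∀ i, 1 ≤ i → i ≤ n + 1 →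
      P i = q * ∑ j ∈ Finset.range i, P j * ∏ l ∈ Finset.Icc 1 (i - 1 - j), (1 - Q l))
    (i : ℕ) (hi : i ≤ n) :
    P 0 ≤ ∑ j ∈ Finset.range (i + 1), P j * ∏ l ∈ Finset.Icc 1 (i - j), (1 - Q l) := by
  induction i with
  | zero => simp
  | succ i ih =>
    have ih := ih (by omega)
    have h := hPi (i + 1) (by omega) (by omega)
    simp only [Nat.add_sub_cancel] at h
    rw [Finset.sum_range_succ]
    have key : (1 - q) * ∑ j ∈ Finset.range (i + 1), P j * ∏ l ∈ Finset.Icc 1 (i - j), (1 - Q l)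
        ≤ ∑ j ∈ Finset.range (i + 1), P j * ∏ l ∈ Finset.Icc 1 (i + 1 - j), (1 - Q l) := by
      rw [Finset.mul_sum]
      apply Finset.sum_le_sum
      intro j hj
      rw [Finset.mem_range] at hj
      have e : i + 1 - j = (i - j) + 1 := by omega
      rw [e, Finset.prod_Icc_succ_top (by omega)]
      have h1 : 0 ≤ ∏ l ∈ Finset.Icc 1 (i - j), (1 - Q l) := by
        apply Finset.prod_nonneg
        intro l hl
        rw [Finset.mem_Icc] at hl
        have := hQ1 l hl.1 (by omega)
        linarith
      have h2 := (hP j (by omega)).le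
      have h3 := hQq (i - j + 1) (by omega) (by omega)
      have h4 := mul_nonneg (mul_nonneg h2 h1) (sub_nonneg.2 h3)
      nlinarith
    simp only [Nat.sub_self, Finset.Icc_eq_empty_of_lt Nat.zero_lt_one, Finset.prod_empty, mul_one]
    linarith

/-- core inequality in the proof of Theorem 3: with
`δ = max {𝒫_{1−k}, …, 𝒫_{−1}}`, the worst-case likelihood ratio of StaSwitch satisfies
`(𝒫_0² − δ)·q·q_1·(p + q + 1 − p_0 − q_{k−1}) ≤ (p² − q_1(p² − p + 2))·𝒫_1·𝒫_{−1}`,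
which bounds the privacy budget `ε ≤ ln((𝒫_0² − δ)/(𝒫_1·𝒫_{−1}))` of StaSwitch. -/
theorem staSwitch_privacy_core_inequality
    (k : ℕ) (hk : 3 ≤ k) (p q : ℝ)
    (hp : p ∈ Set.Ioo (0 : ℝ) 1) (hq : q ∈ Set.Ioo (0 : ℝ) 1)
    (hpq : p + (k - 1 : ℝ) * q = 1)
    (P Q : ℕ → ℝ)
    (hPmem : ∀ i, i ≤ k - 1 → P i ∈ Set.Ioo (0 : ℝ) 1)
    (hQmem : ∀ j, 1 ≤ j → j ≤ k - 1 → Q j ∈ Set.Ioo (0 : ℝ) 1)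
    (hQ : ∀ j, 1 ≤ j → j ≤ k - 1 → Q j = q * ∑ i ∈ Finset.range (k - j), P i)
    (hP0 : P 0 = ∏ j ∈ Finset.Icc 1 (k - 1), (1 - Q j))
    (hPi : ∀ i, 1 ≤ i → i ≤ k - 1 →
      P i = q * ∑ j ∈ Finset.range i, P j * ∏ l ∈ Finset.Icc 1 (i - 1 - j), (1 - Q l))
    (hPsum : ∑ i ∈ Finset.range k, P i = 1)
    (p0 : ℝ) (hp0 : p0 = ∑ i ∈ Finset.range k, P i * (p + (i : ℝ) * q))
    (A : ℤ → ℝ)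
    (hAneg : ∀ j : ℕ, 1 ≤ j → j ≤ k - 1 →
      A ((j : ℤ) - (k : ℤ)) = Q (k - j) * ∏ i ∈ Finset.Icc 1 (j - 1), (1 - Q (k - i)))
    (hA0 : A 0 = p * ∏ j ∈ Finset.Icc 1 (k - 1), (1 - Q (k - j)))
    (hApos : ∀ j : ℕ, 1 ≤ j → j ≤ k - 1 →
      A (j : ℤ) = q * ∑ l ∈ Finset.range j, P l *
        ((p + (j : ℝ) * q) * ∏ i ∈ Finset.Icc 1 (j - l - 1), (1 - Q i)
          + ∑ i ∈ Finset.Icc 1 (k - j - 1), Q i * ∏ r ∈ Finset.Icc 1 (j - l - 1), (1 - Q (r + i))))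
    (δ : ℝ)
    (hδ : IsGreatest {x : ℝ | ∃ j : ℕ, 1 ≤ j ∧ j ≤ k - 1 ∧ x = A ((j : ℤ) - (k : ℤ))} δ) :
    (A 0 ^ 2 - δ) * (q * Q 1 * (p + q + 1 - p0 - Q (k - 1)))
      ≤ (p ^ 2 - Q 1 * (p ^ 2 - p + 2)) * (A 1 * A (-1)) := by
  obtain ⟨n, rfl⟩ : ∃ n, k = n + 2 := ⟨k - 2, by omega⟩
  have e1 : n + 2 - 1 = n + 1 := by omega
  simp only [e1] at hPmem hQmem hQ hP0 hPi hAneg hA0 hApos hδ ⊢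
  obtain ⟨hp1, hp2⟩ := hp
  obtain ⟨hq1, hq2⟩ := hq
  push_cast at hpq
  have hPpos : ∀ i, i ≤ n + 1 → 0 < P i := fun i hi => (hPmem i hi).1
  have hQq : ∀ j, 1 ≤ j → j ≤ n + 1 → Q j ≤ q := by
    intro j h1 h2
    rw [hQ j h1 h2]
    have : ∑ i ∈ Finset.range (n + 2 - j), P i ≤ 1 := by
      rw [← hPsum]
      apply Finset.sum_le_sum_of_subset_of_nonneg
      · intro a ha; simp only [Finset.mem_range] at *; omega
      · intro i hi _; rw [Finset.mem_range] at hi; exact (hPpos i (by omega)).le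
    nlinarith
  have hPlow : ∀ i, i ≤ n → q * P 0 ≤ P (i + 1) := by
    intro i hi
    have h := aux_growth n q hq1 P Q hPpos (fun j h1 h2 => (hQmem j h1 h2).2) hQq hPi i hi
    rw [hPi (i + 1) (by omega) (by omega)]
    simp only [Nat.add_sub_cancel]
    exact mul_le_mul_of_nonneg_left h hq1.le
  have hmain : (2 - p) * P 0 ≤ 1 := by
    rw [Finset.sum_range_succ'] at hPsum
    have : ∑ i ∈ Finset.range (n + 1), q * P 0 ≤ ∑ i ∈ Finset.range (n + 1), P (i + 1) :=
      Finset.sum_le_sum (fun i hi => hPlow i (by rw [Finset.mem_range] at hi; omega))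
    simp only [Finset.sum_const, Finset.card_range, nsmul_eq_mul] at this
    push_cast at this
    have e : p = 1 - (n + 1) * q := by linarith
    rw [e]
    linarith
  have hP0pos := hPpos 0 (by omega)
  obtain ⟨hQ1p, hQ1l⟩ := hQmem 1 le_rfl (by omega)
  have hA0' : A 0 = p * P 0 := by
    rw [hA0, hP0, aux_prod_reflect n (fun j => 1 - Q j)]
  have hQsum : ∑ j ∈ Finset.Icc 1 (n + 1), Q j = 1 - p0 := by
    have h1 : ∑ j ∈ Finset.Icc 1 (n + 1), Q j
        = q * ∑ j ∈ Finset.Icc 1 (n + 1), ∑ i ∈ Finset.range (n + 2 - j), P i := by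
      rw [Finset.mul_sum]
      apply Finset.sum_congr rfl
      intro j hj
      rw [Finset.mem_Icc] at hj
      exact hQ j hj.1 hj.2
    rw [h1, aux_sum_reflect n (fun m => ∑ i ∈ Finset.range m, P i), aux_double, hp0]
    rw [Finset.mul_sum, eq_sub_iff_add_eq, ← Finset.sum_add_distrib, ← hPsum]
    apply Finset.sum_congr rfl
    intro i _
    have e : p = 1 - (n + 1) * q := by linarith
    rw [e]; push_cast; ring
  have hS0 : ∑ j ∈ Finset.Icc 1 n, Q j = 1 - p0 - Q (n + 1) := by
    rw [Finset.sum_Icc_succ_top (by omega)] at hQsum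
    linarith
  have hSnn : 0 ≤ ∑ j ∈ Finset.Icc 1 n, Q j := by
    apply Finset.sum_nonneg
    intro j hj
    rw [Finset.mem_Icc] at hj
    exact (hQmem j hj.1 (by omega)).1.le
  have hA1 : A 1 = q * (P 0 * (p + q + 1 - p0 - Q (n + 1))) := by
    have h := hApos 1 le_rfl (by omega)
    have e2 : n + 1 - 1 = n := by omega
    simp [e2] at h
    rw [h, hS0]; ring
  have hAm : (1 - Q 1) * A (-1) = Q 1 * P 0 := by
    have h := hAneg (n + 1) (by omega) le_rfl
    have e2 : ((n + 1 : ℕ) : ℤ) - ((n + 2 : ℕ) : ℤ) = -1 := by push_cast; ring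
    have e3 : n + 2 - (n + 1) = 1 := by omega
    rw [e2, e3, Nat.add_sub_cancel] at h
    have h5 := aux_prod_reflect n (fun j => 1 - Q j)
    rw [← hP0, Finset.prod_Icc_succ_top (by omega), e3] at h5
    rw [h, ← h5]; ring
  have hδ1 : A (-1) ≤ δ := by
    apply hδ.2
    refine ⟨n + 1, by omega, le_rfl, ?_⟩
    congr 1; push_cast; ring
  have hS : 0 ≤ p + q + 1 - p0 - Q (n + 1) := by linarith
  generalize p + q + 1 - p0 - Q (n + 1) = S at *
  have hAm' : A (-1) = Q 1 * P 0 / (1 - Q 1) := by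
    rw [eq_div_iff (by linarith)]; linarith
  have hx : 0 < 1 - Q 1 := by linarith
  have hδ2 : Q 1 * P 0 ≤ δ * (1 - Q 1) := by nlinarith
  have hcore : Q 1 * (2 - p) * P 0 ^ 2 ≤ δ * (1 - Q 1) := by
    have := mul_le_mul_of_nonneg_left hmain (mul_pos hQ1p hP0pos).le
    nlinarith
  rw [hA0', hA1, hAm']
  have e : (p ^ 2 - Q 1 * (p ^ 2 - p + 2)) * (q * (P 0 * S) * (Q 1 * P 0 / (1 - Q 1)))
      = ((p ^ 2 - Q 1 * (p ^ 2 - p + 2)) * P 0 ^ 2 * (q * Q 1 * S)) / (1 - Q 1) := by ring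
  rw [e, le_div_iff₀ hx]
  have hw : 0 ≤ q * Q 1 * S := by positivity
  have := mul_le_mul_of_nonneg_right hcore hw
  linarith
end

section
/- The one-step-forward allocating probability admits the closed form 𝒫_1 = q·P^0·(p + q + 1 − p_0 − q_{k−1}), and the one-step-backward allocating probability satisfies 𝒫_{−1} = q_1·∏_{j=2}^{k−1}(1 − q_j). -/
theorem aux_double_sum (P : ℕ → ℝ) (n : ℕ) :
    ∑ m ∈ Finset.range n, ∑ i ∈ Finset.range (m + 1), P i
      = ∑ i ∈ Finset.range (n + 1), P i * ((n : ℝ) - i) := by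
  induction n with
  | zero => simp
  | succ n ih =>
    rw [Finset.sum_range_succ, ih, Finset.sum_range_succ _ (n + 1), ← Finset.sum_add_distrib]
    push_cast
    rw [sub_self, mul_zero, add_zero]
    exact Finset.sum_congr rfl fun i _ => by ring

/-- the one-step-forward allocating probability admits the closed form
`𝒫_1 = q·P^0·(p + q + 1 − p_0 − q_{k−1})`, and the one-step-backward allocating probability
satisfies `𝒫_{−1} = q_1·∏_{j=2}^{k−1}(1 − q_j)`. -/
theorem staSwitch_P1_Pneg1_closed_form
    (k : ℕ) (hk : 3 ≤ k) (p q : ℝ)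
    (hp : p ∈ Set.Ioo (0 : ℝ) 1) (hq : q ∈ Set.Ioo (0 : ℝ) 1)
    (hpq : p + (k - 1 : ℝ) * q = 1)
    (P Q : ℕ → ℝ)
    (hPmem : ∀ i, i ≤ k - 1 → P i ∈ Set.Ioo (0 : ℝ) 1)
    (hQmem : ∀ j, 1 ≤ j → j ≤ k - 1 → Q j ∈ Set.Ioo (0 : ℝ) 1)
    (hQ : ∀ j, 1 ≤ j → j ≤ k - 1 → Q j = q * ∑ i ∈ Finset.range (k - j), P i)
    (hP0 : P 0 = ∏ j ∈ Finset.Icc 1 (k - 1), (1 - Q j))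
    (hPi : ∀ i, 1 ≤ i → i ≤ k - 1 →
      P i = q * ∑ j ∈ Finset.range i, P j * ∏ l ∈ Finset.Icc 1 (i - 1 - j), (1 - Q l))
    (hPsum : ∑ i ∈ Finset.range k, P i = 1)
    (p0 : ℝ) (hp0 : p0 = ∑ i ∈ Finset.range k, P i * (p + (i : ℝ) * q))
    (A : ℤ → ℝ)
    (hAneg : ∀ j : ℕ, 1 ≤ j → j ≤ k - 1 →
      A ((j : ℤ) - (k : ℤ)) = Q (k - j) * ∏ i ∈ Finset.Icc 1 (j - 1), (1 - Q (k - i)))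
    (hA0 : A 0 = p * ∏ j ∈ Finset.Icc 1 (k - 1), (1 - Q (k - j)))
    (hApos : ∀ j : ℕ, 1 ≤ j → j ≤ k - 1 →
      A (j : ℤ) = q * ∑ l ∈ Finset.range j, P l *
        ((p + (j : ℝ) * q) * ∏ i ∈ Finset.Icc 1 (j - l - 1), (1 - Q i)
          + ∑ i ∈ Finset.Icc 1 (k - j - 1), Q i * ∏ r ∈ Finset.Icc 1 (j - l - 1), (1 - Q (r + i))))
    :
    A 1 = q * P 0 * (p + q + 1 - p0 - Q (k - 1)) ∧
    A (-1) = Q 1 * ∏ j ∈ Finset.Icc 2 (k - 1), (1 - Q j) := by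
  have hS : ∑ j ∈ Finset.Icc 1 (k - 1), Q j = 1 - p0 := by
    have h1 : ∑ j ∈ Finset.Icc 1 (k - 1), Q j
        = ∑ m ∈ Finset.range (k - 1), q * ∑ i ∈ Finset.range (m + 1), P i := by
      refine Finset.sum_nbij' (fun j => k - 1 - j) (fun m => k - 1 - m) ?_ ?_ ?_ ?_ ?_
      · intro j hj
        simp only [Finset.mem_Icc, Finset.mem_range] at *
        omega
      · intro j hj
        simp only [Finset.mem_Icc, Finset.mem_range] at *
        omega
      · intro j hj
        simp only [Finset.mem_Icc, Finset.mem_range] at *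
        omega
      · intro j hj
        simp only [Finset.mem_range] at *
        omega
      · intro j hj
        simp only [Finset.mem_Icc] at hj
        rw [hQ j hj.1 hj.2]
        have : k - 1 - j + 1 = k - j := by omega
        rw [this]
    rw [h1, ← Finset.mul_sum, aux_double_sum, hp0]
    have hk1 : k - 1 + 1 = k := by omega
    have hk2 : ((k - 1 : ℕ) : ℝ) = (k : ℝ) - 1 := by
      rw [Nat.cast_sub (by omega)]; simp
    rw [hk1, hk2, Finset.mul_sum, eq_sub_iff_add_eq, ← Finset.sum_add_distrib]
    refine Eq.trans ?_ hPsum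
    refine Finset.sum_congr rfl fun i _ => ?_
    linear_combination P i * hpq
  constructor
  · have h := hApos 1 le_rfl (by omega)
    have hsplit : ∑ j ∈ Finset.Icc 1 (k - 1), Q j
        = ∑ j ∈ Finset.Icc 1 (k - 1 - 1), Q j + Q (k - 1) := by
      obtain ⟨n, rfl⟩ : ∃ n, k = n + 2 := ⟨k - 2, by omega⟩
      exact Finset.sum_Icc_succ_top (by omega) _
    simp at h
    rw [h]
    linear_combination q * P 0 * (hS - hsplit)
  · have h := hAneg (k - 1) (by omega) le_rfl
    have e1 : (((k - 1 : ℕ) : ℤ) - (k : ℤ)) = -1 := by omega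
    have e2 : k - (k - 1) = 1 := by omega
    rw [e1, e2] at h
    rw [h]
    congr 1
    refine Finset.prod_nbij' (fun j => k - j) (fun m => k - m) ?_ ?_ ?_ ?_ ?_
    · intro j hj
      simp only [Finset.mem_Icc] at *
      omega
    · intro j hj
      simp only [Finset.mem_Icc] at *
      omega
    · intro j hj
      simp only [Finset.mem_Icc] at *
      omega
    · intro j hj
      simp only [Finset.mem_Icc] at *
      omega
    · intro j hj
      rfl
end
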